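/- Let C be a triangulated category and B a weakly negative set of objects of C. Then for any integers m, n and any object M ∈ B_{[m,n]}, there exists a distinguished triangle X → M → Y → X[1] with X ∈ B_{[m,0]} and Y ∈ B_{[1,n]}. -/

import Mathlib

open CategoryTheory Limits Pretriangulated ZeroObject

universe v u v' u'

namespace CategoryTheory.Triangulated

/-- Mathlib's former `CategoryTheory.Triangulated.Subcategory` (since removed), with its
old meaning. -/
structure Subcategory (C : Type u) [Category.{v} C] [HasZeroObject C] [HasShift C ℤ]
    [Preadditive C] [∀ n : ℤ, (shiftFunctor C n).Additive] [Pretriangulated C] where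
  P : C → Prop
  zero' : ∃ (Z : C) (_ : IsZero Z), P Z
  shift (X : C) (n : ℤ) : P X → P (X⟦n⟧)
  ext₂' (T : Triangle C) (_ : T ∈ distTriang C) :
    P T.obj₁ → P T.obj₃ → ObjectProperty.isoClosure P T.obj₂

/-- Mathlib's former `CategoryTheory.Triangulated.Subcategory.mk'` (since removed). -/
def Subcategory.mk' {C : Type u} [Category.{v} C] [HasZeroObject C] [HasShift C ℤ]
    [Preadditive C] [∀ n : ℤ, (shiftFunctor C n).Additive] [Pretriangulated C]
    (P : C → Prop) (zero : P 0) (shift : ∀ (X : C) (n : ℤ), P X → P (X⟦n⟧))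
    (ext₂ : ∀ (T : Triangle C) (_ : T ∈ distTriang C), P T.obj₁ → P T.obj₃ → P T.obj₂) :
    Subcategory C where
  P := P
  zero' := ⟨0, isZero_zero _, zero⟩
  shift := shift
  ext₂' T hT h₁ h₃ := ObjectProperty.le_isoClosure P _ (ext₂ T hT h₁ h₃)

end CategoryTheory.Triangulated

section TriangulatedPrelude

variable {C : Type u} [Category.{v} C] [HasZeroObject C] [HasShift C ℤ] [Preadditive C]
  [∀ n : ℤ, (shiftFunctor C n).Additive] [Pretriangulated C]

/-- The objects of the smallest strict full triangulated subcategory of `C`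
containing the set of objects `B`. -/
inductive genSub (B : Set C) : C → Prop
  | of (X : C) (hX : X ∈ B) : genSub B X
  | zero (X : C) (hX : IsZero X) : genSub B X
  | shift (X : C) (n : ℤ) (hX : genSub B X) : genSub B (X⟦n⟧)
  | ext₂ (T : Triangle C) (hT : T ∈ distTriang C) (h₁ : genSub B T.obj₁)
      (h₃ : genSub B T.obj₃) : genSub B T.obj₂

/-- The triangulated subcategory of `C` generated by `B`. -/
def genSubcat (B : Set C) : Triangulated.Subcategory C :=
  Triangulated.Subcategory.mk' (genSub B)
    (genSub.zero _ (isZero_zero _))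
    (fun X n h => genSub.shift X n h)
    (fun T hT h₁ h₃ => genSub.ext₂ T hT h₁ h₃)

/-- The extension-closure of a class of objects `E`: the smallest class containing `E`
and `0` and such that for any distinguished triangle `X ⟶ Y ⟶ Z` with `X, Z` in the
class, `Y` is also in the class. -/
inductive extClosure (E : Set C) : C → Prop
  | of (X : C) (hX : X ∈ E) : extClosure E X
  | zero (X : C) (hX : IsZero X) : extClosure E X
  | ext₂ (T : Triangle C) (hT : T ∈ distTriang C) (h₁ : extClosure E T.obj₁)
      (h₃ : extClosure E T.obj₃) : extClosure E T.obj₂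

/-- `D_{[i,j]}`: the extension-closure of `∪_{i ≤ l ≤ j} D[l]`. -/
def shiftClosure (D : Set C) (i j : ℤ) : Set C :=
  extClosure {X | ∃ (Y : C) (l : ℤ), i ≤ l ∧ l ≤ j ∧ Y ∈ D ∧ X = Y⟦l⟧}

/-- `D_{≥ i} = ∪_{k ≥ i} D_{[i,k]}`. -/
def shiftClosureGE (D : Set C) (i : ℤ) : Set C := {X | ∃ k, i ≤ k ∧ X ∈ shiftClosure D i k}

/-- `D_{≤ j} = ∪_{k ≤ j} D_{[k,j]}`. -/
def shiftClosureLE (D : Set C) (j : ℤ) : Set C := {X | ∃ k, k ≤ j ∧ X ∈ shiftClosure D k j}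

/-- A set of objects `D` is weakly negative if `0 ∈ D` and `Hom(X, Y[i]) = 0`
for all `X, Y ∈ D` and all `i ≥ 2`. -/
def WeaklyNegative (D : Set C) : Prop :=
  (0 : C) ∈ D ∧ ∀ X ∈ D, ∀ Y ∈ D, ∀ i : ℤ, 2 ≤ i → ∀ f : X ⟶ (Y⟦i⟧), f = 0

end TriangulatedPrelude

section Aux

variable {C : Type u} [Category.{v} C] [HasZeroObject C] [HasShift C ℤ] [Preadditive C]
  [∀ n : ℤ, (shiftFunctor C n).Additive] [Pretriangulated C]

lemma aux_vanish_left (E : Set C) (Z : C) (h : ∀ X ∈ E, ∀ f : X ⟶ Z, f = 0)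
    (X : C) (hX : extClosure E X) : ∀ f : X ⟶ Z, f = 0 := by
  induction hX with
  | of X hX => exact h X hX
  | zero X hX => exact fun f => hX.eq_of_src _ _
  | ext₂ T hT _ _ ih₁ ih₃ =>
    intro f
    obtain ⟨g, hg⟩ := T.yoneda_exact₂ hT f (ih₁ _)
    rw [hg, ih₃ g, comp_zero]

lemma aux_vanish_right (E : Set C) (Z : C) (h : ∀ X ∈ E, ∀ f : Z ⟶ X⟦(1 : ℤ)⟧, f = 0)
    (X : C) (hX : extClosure E X) : ∀ f : Z ⟶ X⟦(1 : ℤ)⟧, f = 0 := by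
  induction hX with
  | of X hX => exact h X hX
  | zero X hX => exact fun f => (Functor.map_isZero (shiftFunctor C (1 : ℤ)) hX).eq_of_tgt _ _
  | ext₂ T hT _ _ ih₁ ih₃ =>
    intro f
    obtain ⟨g, hg⟩ := Triangle.coyoneda_exact₂ _ (Triangle.shift_distinguished _ hT 1) f (ih₃ _)
    rw [hg]
    have : g = 0 := ih₁ g
    rw [this, zero_comp]
    rfl

lemma aux_base (B : Set C) (hB : WeaklyNegative B) (X Y : C) (hX : X ∈ B) (hY : Y ∈ B)
    (k l : ℤ) (hk : k ≤ 0) (hl : 1 ≤ l) (f : X⟦k⟧ ⟶ Y⟦l⟧⟦(1 : ℤ)⟧) : f = 0 := by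
  apply (shiftFunctor C (-k)).map_injective
  rw [Functor.map_zero]
  let e₁ := (shiftFunctorCompIsoId C k (-k) (by lia)).app X
  let e₂ := (shiftFunctorAdd' C l 1 (l + 1) rfl).app Y
  let e₃ := (shiftFunctorAdd' C (l + 1) (-k) (l + 1 - k) (by lia)).app Y
  have := hB.2 X hX Y hY (l + 1 - k) (by lia)
    (e₁.inv ≫ f⟦-k⟧' ≫ e₂.inv⟦-k⟧' ≫ e₃.inv)
  rw [← cancel_epi e₁.inv, ← cancel_mono (e₂.inv⟦-k⟧'), ← cancel_mono e₃.inv]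
  simpa using this

lemma aux_vanish (B : Set C) (hB : WeaklyNegative B) (m n : ℤ) (X Y : C)
    (hX : X ∈ shiftClosure B m 0) (hY : Y ∈ shiftClosure B 1 n) (f : X ⟶ Y⟦(1 : ℤ)⟧) :
    f = 0 := by
  refine aux_vanish_left _ _ ?_ X hX f
  rintro _ ⟨X', k, _, hk, hX', rfl⟩
  refine aux_vanish_right _ _ ?_ Y hY
  rintro _ ⟨Y', l, hl, _, hY', rfl⟩
  exact aux_base B hB X' Y' hX' hY' k l hk hl

lemma aux_swap (P Q : ObjectProperty C) (h : ∀ X Y, P X → Q Y → ∀ f : X ⟶ Y⟦(1 : ℤ)⟧, f = 0) :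
    ObjectProperty.extensionProduct Q P ≤ ObjectProperty.extensionProduct P Q := by
  rintro M ⟨Y, X, a, b, c, hT, hY, hX⟩
  obtain ⟨e, -⟩ := exists_iso_binaryBiproduct_of_distTriang _ hT (h X Y hX hY c)
  refine ObjectProperty.prop_of_iso _ ((biprod.braiding X Y) ≪≫ e.symm) ?_
  exact ⟨_, _, _, _, _, binaryBiproductTriangle_distinguished X Y, hX, hY⟩

lemma aux_ext (E : Set C) : ObjectProperty.extensionProduct (extClosure E) (extClosure E)
    ≤ extClosure E := by
  rintro M ⟨Y, X, a, b, c, hT, hY, hX⟩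
  exact extClosure.ext₂ _ hT hY hX

open ObjectProperty in
lemma aux_main [IsTriangulated C] (P Q : ObjectProperty C)
    (h : ∀ X Y, P X → Q Y → ∀ f : X ⟶ Y⟦(1 : ℤ)⟧, f = 0)
    (hP : extensionProduct P P ≤ P) (hQ : extensionProduct Q Q ≤ Q) :
    extensionProduct (extensionProduct P Q) (extensionProduct P Q) ≤ extensionProduct P Q := by
  rw [extensionProduct_assoc, ← extensionProduct_assoc Q P Q]
  refine (monotone_extensionProduct_right _
    (monotone_extensionProduct_left _ (aux_swap P Q h))).trans ?_
  rw [extensionProduct_assoc, ← extensionProduct_assoc P P]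
  exact (monotone_extensionProduct_left _ hP).trans (monotone_extensionProduct_right _ hQ)

end Aux

/-- Proposition: weak weight decompositions exist for objects of `B_{[m,n]}`
when `B` is a weakly negative set of objects. -/
theorem statement4 {C : Type u} [Category.{v} C] [HasZeroObject C] [HasShift C ℤ]
    [Preadditive C] [∀ n : ℤ, (shiftFunctor C n).Additive] [Pretriangulated C]
    [IsTriangulated C] (B : Set C) (hB : WeaklyNegative B) (m n : ℤ) (M : C)
    (hM : M ∈ shiftClosure B m n) :
    ∃ (X Y : C) (a : X ⟶ M) (b : M ⟶ Y) (c : Y ⟶ X⟦(1 : ℤ)⟧),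
      (Triangle.mk a b c ∈ distTriang C) ∧ X ∈ shiftClosure B m 0 ∧ Y ∈ shiftClosure B 1 n := by
  induction hM with
  | of X hX =>
    obtain ⟨Y, l, h₁, h₂, hY, rfl⟩ := hX
    by_cases hl : l ≤ 0
    · exact ⟨_, _, _, _, _, contractible_distinguished (Y⟦l⟧),
        extClosure.of _ ⟨Y, l, h₁, hl, hY, rfl⟩, extClosure.zero _ (isZero_zero C)⟩
    · exact ⟨_, _, _, _, _, contractible_distinguished₁ (Y⟦l⟧),
        extClosure.zero _ (isZero_zero C), extClosure.of _ ⟨Y, l, by lia, h₂, hY, rfl⟩⟩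
  | zero X hX =>
    exact ⟨_, _, _, _, _, contractible_distinguished X,
        extClosure.zero _ hX, extClosure.zero _ (isZero_zero C)⟩
  | ext₂ T hT _ _ ih₁ ih₃ =>
    exact aux_main (shiftClosure B m 0) (shiftClosure B 1 n)
      (fun X Y hX hY => aux_vanish B hB m n X Y hX hY) (aux_ext _) (aux_ext _) _
      ⟨_, _, _, _, _, hT, ih₁, ih₃⟩
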